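/- arXiv:1604.07088 — 4 statements merged into one kernel-verified Lean document; each statement's English description precedes it below -/
import Mathlib

section
/- Let c ∈ ℝ² with ‖c‖ = v, and let r1, r2, v > 0 satisfy r2 − r1 < v < r1 + r2 and v > r1 − r2 (i.e., |r1 − r2| < v < r1 + r2, partially overlapping circles). Then the area of B(O, r2) \ B(c, r1) equals π r2² + (1/2)·√(((r1 + v)² − r2²)·(r2² − (r1 − v)²)) − r1²·arccos((r1² + v² − r2²)/(2 v r1)) − r2²·arccos((r2² + v² − r1²)/(2 v r2)). -/
/-!
Let `u = v⁻¹ c` and cut the plane along the radical axis `⟪u, p⟫ = a` of the two circles, where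
`a = (r2² + v² - r1²) / (2v)`. On the side `⟪u, p⟫ ≤ a` the disk around `c` lies inside the disk
around `0`, and on the other side the inclusion is reversed. The lune is therefore the circular
segment of `B(0, r2)` on the near side minus the circular segment of `B(c, r1)` on that side, the
second being contained in the first. `volume_segment` gives the area of a circular segment by
integrating the chord length `2√(r² - x²)`; the two half-chords on the axis have equal length, so
the square-root terms add up to `v` times that half-chord.
-/

open MeasureTheory Metric Real

lemma integral_chord (r t : ℝ) (hr : 0 < r) (h1 : -r ≤ t) (h2 : t ≤ r) :
    ∫ x in t..r, 2 * √(r ^ 2 - x ^ 2) = r ^ 2 * arccos (t / r) - t * √(r ^ 2 - t ^ 2) := by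
  have key : ∀ x ∈ Set.Ioo t r, HasDerivAt
      (fun x => x * √(r ^ 2 - x ^ 2) - r ^ 2 * arccos (x / r)) (2 * √(r ^ 2 - x ^ 2)) x := by
    intro x hx
    have hpos : 0 < r ^ 2 - x ^ 2 := by nlinarith [hx.1, hx.2]
    have hs : √(r ^ 2 - x ^ 2) ≠ 0 := (sqrt_pos.2 hpos).ne'
    have hsq : √(r ^ 2 - x ^ 2) ^ 2 = r ^ 2 - x ^ 2 := sq_sqrt hpos.le
    have hne1 : x / r ≠ -1 := by
      intro h
      rw [div_eq_iff hr.ne'] at h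
      linarith [hx.1]
    have hne2 : x / r ≠ 1 := by
      intro h
      rw [div_eq_iff hr.ne'] at h
      linarith [hx.2]
    have hs2 : √(1 - (x / r) ^ 2) = √(r ^ 2 - x ^ 2) / r := by
      rw [show 1 - (x / r) ^ 2 = (r ^ 2 - x ^ 2) / r ^ 2 by field_simp,
        sqrt_div hpos.le, sqrt_sq hr.le]
    have d1 : HasDerivAt (fun x : ℝ => r ^ 2 - x ^ 2) (-(2 * x)) x := by
      simpa using ((hasDerivAt_id x).pow 2).const_sub (r ^ 2)
    have d2 := (hasDerivAt_id x).mul (d1.sqrt hpos.ne')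
    have d3 := ((hasDerivAt_arccos hne1 hne2).comp x
      ((hasDerivAt_id x).div_const r)).const_mul (r ^ 2)
    refine (d2.sub d3).congr_deriv ?_
    simp only [id, hs2]
    field_simp
    rw [hsq]
    ring
  rw [intervalIntegral.integral_eq_sub_of_hasDerivAt_of_le h2 (by fun_prop) key
    (by apply Continuous.intervalIntegrable; fun_prop)]
  simp [hr.ne']

/-- Area of the circular segment `{t ≤ x} ∩ {x² + y² < r²}` in Cartesian coordinates. -/
lemma volume_segment_prod (r t : ℝ) (hr : 0 < r) (h1 : -r ≤ t) (h2 : t ≤ r) :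
    volume {q : ℝ × ℝ | t ≤ q.1 ∧ q.1 ^ 2 + q.2 ^ 2 < r ^ 2} =
      ENNReal.ofReal (r ^ 2 * arccos (t / r) - t * √(r ^ 2 - t ^ 2)) := by
  have hset : {q : ℝ × ℝ | t ≤ q.1 ∧ q.1 ^ 2 + q.2 ^ 2 < r ^ 2} =
      regionBetween (fun x => -√(r ^ 2 - x ^ 2)) (fun x => √(r ^ 2 - x ^ 2)) (Set.Icc t r) := by
    ext ⟨x, y⟩
    simp only [regionBetween, Set.mem_ofPred_eq, Set.mem_Icc, Set.mem_Ioo]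
    rw [← abs_lt, lt_sqrt (abs_nonneg y), sq_abs]
    constructor
    · rintro ⟨h, h'⟩
      exact ⟨⟨h, by nlinarith [sq_nonneg y]⟩, by linarith⟩
    · rintro ⟨⟨h, -⟩, h'⟩
      exact ⟨h, by linarith⟩
  rw [hset, Measure.volume_eq_prod, volume_regionBetween_eq_integral
    (Continuous.integrableOn_Icc (by fun_prop)) (Continuous.integrableOn_Icc (by fun_prop))
    measurableSet_Icc (fun x _ => by linarith [sqrt_nonneg (r ^ 2 - x ^ 2)]),
    integral_Icc_eq_integral_Ioc, ← intervalIntegral.integral_of_le h2,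
    ← integral_chord r t hr h1 h2]
  congr 2
  ext x
  simp only [Pi.sub_apply]
  ring

/-- Area of the circular segment cut from `B(0, r)` by the half-plane `t ≤ ⟪u, p⟫`, for a unit
vector `u` and a signed distance `t` of the chord from the center. -/
lemma volume_segment (u : EuclideanSpace ℝ (Fin 2)) (hu : ‖u‖ = 1) (r t : ℝ) (hr : 0 < r)
    (h1 : -r ≤ t) (h2 : t ≤ r) :
    volume {p : EuclideanSpace ℝ (Fin 2) | t ≤ inner ℝ u p ∧ ‖p‖ < r} =
      ENNReal.ofReal (r ^ 2 * arccos (t / r) - t * √(r ^ 2 - t ^ 2)) := by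
  -- Cartesian coordinates in an orthonormal basis with first vector `u`.
  obtain ⟨b, hb⟩ := Orthonormal.exists_orthonormalBasis_extension_of_card_eq
    (𝕜 := ℝ) (E := EuclideanSpace ℝ (Fin 2)) (ι := Fin 2) (by simp) (v := fun _ => u) (s := {0})
    (by
      rw [orthonormal_iff_ite]
      rintro ⟨i, hi⟩ ⟨j, hj⟩
      obtain rfl : i = 0 := hi
      obtain rfl : j = 0 := hj
      simp [hu])
  have hb0 : b 0 = u := hb 0 rfl
  have hmp := (volume_preserving_finTwoArrow ℝ).comp
    ((PiLp.volume_preserving_ofLp (Fin 2)).comp b.measurePreserving_repr)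
  have hmeas : MeasurableSet {q : ℝ × ℝ | t ≤ q.1 ∧ q.1 ^ 2 + q.2 ^ 2 < r ^ 2} :=
    (measurableSet_le (f := fun _ : ℝ × ℝ => t) (by fun_prop) measurable_fst).inter
      (measurableSet_lt (f := fun q : ℝ × ℝ => q.1 ^ 2 + q.2 ^ 2) (by fun_prop) measurable_const)
  rw [← volume_segment_prod r t hr h1 h2, ← hmp.measure_preimage hmeas.nullMeasurableSet]
  congr 1
  ext p
  have hn : ‖p‖ ^ 2 = b.repr p 0 ^ 2 + b.repr p 1 ^ 2 := by
    rw [← b.repr.norm_map p, EuclideanSpace.real_norm_sq_eq, Fin.sum_univ_two]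
  have h0 : b.repr p 0 = inner ℝ u p := by rw [b.repr_apply_apply, hb0]
  have : ‖p‖ < r ↔ ‖p‖ ^ 2 < r ^ 2 := (sq_lt_sq₀ (norm_nonneg p) hr.le).symm
  rw [Set.mem_ofPred_eq, this, hn, ← h0]
  rfl

/-- Area of the lune `B(O, r2) \ B(c, r1)` for two partially-overlapping disks
whose centers are distance `v` apart. -/
theorem lune_area (c : EuclideanSpace ℝ (Fin 2)) (v r1 r2 : ℝ)
    (hc : ‖c‖ = v) (hr1 : 0 < r1) (hr2 : 0 < r2) (hv : 0 < v)
    (h1 : r2 - r1 < v) (h2 : v < r1 + r2) (h3 : r1 - r2 < v) :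
    volume (ball (0 : EuclideanSpace ℝ (Fin 2)) r2 \ ball c r1) =
      ENNReal.ofReal (π * r2 ^ 2
        + (1 / 2) * Real.sqrt (((r1 + v) ^ 2 - r2 ^ 2) * (r2 ^ 2 - (r1 - v) ^ 2))
        - r1 ^ 2 * Real.arccos ((r1 ^ 2 + v ^ 2 - r2 ^ 2) / (2 * v * r1))
        - r2 ^ 2 * Real.arccos ((r2 ^ 2 + v ^ 2 - r1 ^ 2) / (2 * v * r2))) := by
  -- Signed distances of the radical axis from `0` and from `c`.
  set a := (r2 ^ 2 + v ^ 2 - r1 ^ 2) / (2 * v) with ha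
  set b := (r1 ^ 2 + v ^ 2 - r2 ^ 2) / (2 * v) with hb
  have ha' : 2 * v * a = r2 ^ 2 + v ^ 2 - r1 ^ 2 := by rw [ha]; field_simp
  have hb' : 2 * v * b = r1 ^ 2 + v ^ 2 - r2 ^ 2 := by rw [hb]; field_simp
  have hab : a + b = v := by rw [ha, hb]; field_simp; ring
  have ha1 : -r2 ≤ a := by rw [ha, le_div_iff₀ (by positivity)]; nlinarith
  have ha2 : a ≤ r2 := by rw [ha, div_le_iff₀ (by positivity)]; nlinarith
  have hb1 : -r1 ≤ b := by rw [hb, le_div_iff₀ (by positivity)]; nlinarith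
  have hb2 : b ≤ r1 := by rw [hb, div_le_iff₀ (by positivity)]; nlinarith
  set u : EuclideanSpace ℝ (Fin 2) := v⁻¹ • c with hu
  have hcu : c = v • u := by rw [hu, smul_inv_smul₀ hv.ne']
  have hun : ‖u‖ = 1 := by
    rw [hu, norm_smul, hc, norm_inv, norm_of_nonneg hv.le, inv_mul_cancel₀ hv.ne']
  have huc : inner ℝ u c = v := by
    rw [hcu, inner_smul_right, real_inner_self_eq_norm_sq, hun]; ring
  have hdist : ∀ p, ‖c - p‖ ^ 2 = ‖p‖ ^ 2 - 2 * v * inner ℝ u p + v ^ 2 := by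
    intro p
    rw [norm_sub_sq_real, hc]
    nth_rw 1 [hcu]
    rw [real_inner_smul_left]
    ring
  set S2 := {p : EuclideanSpace ℝ (Fin 2) | -a ≤ inner ℝ (-u) p ∧ ‖p‖ < r2} with hS2
  set T := {p : EuclideanSpace ℝ (Fin 2) | b ≤ inner ℝ u p ∧ ‖p‖ < r1} with hT
  have hTmeas : MeasurableSet T :=
    (measurableSet_le (g := fun p => inner ℝ u p) measurable_const (by fun_prop)).inter
      (measurableSet_lt (f := fun p => ‖p‖) (by fun_prop) measurable_const)
  -- The segment of `B(c, r1)` is the preimage of `T` under the point reflection `p ↦ c - p`.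
  set S1 := (fun p => c - p) ⁻¹' T with hS1
  have hS1meas : MeasurableSet S1 := hTmeas.preimage (by fun_prop)
  have hS1v : volume S1 = volume T :=
    (Measure.measurePreserving_sub_left volume c).measure_preimage hTmeas.nullMeasurableSet
  have mem1 : ∀ p, p ∈ S1 ↔ inner ℝ u p ≤ a ∧ ‖c - p‖ < r1 := by
    intro p
    simp only [hS1, hT, Set.mem_preimage, Set.mem_ofPred_eq, inner_sub_right, huc]
    constructor <;> rintro ⟨h, h'⟩ <;> exact ⟨by linarith, h'⟩
  have mem2 : ∀ p, p ∈ S2 ↔ inner ℝ u p ≤ a ∧ ‖p‖ < r2 := by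
    intro p
    simp only [hS2, Set.mem_ofPred_eq, inner_neg_left, neg_le_neg_iff]
  have hsub : S1 ⊆ S2 := by
    intro p hp
    rw [mem1] at hp
    rw [mem2]
    refine ⟨hp.1, lt_of_pow_lt_pow_left₀ 2 hr2.le ?_⟩
    have := pow_lt_pow_left₀ hp.2 (norm_nonneg _) two_ne_zero
    rw [hdist] at this
    nlinarith [mul_le_mul_of_nonneg_left hp.1 hv.le]
  have hlune : ball (0 : EuclideanSpace ℝ (Fin 2)) r2 \ ball c r1 = S2 \ S1 := by
    ext p
    rw [Set.mem_sdiff, Set.mem_sdiff, mem1, mem2, mem_ball_zero_iff, mem_ball', dist_eq_norm]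
    constructor
    · rintro ⟨h, h'⟩
      refine ⟨⟨?_, h⟩, fun h'' => h' h''.2⟩
      have e1 := pow_lt_pow_left₀ h (norm_nonneg _) two_ne_zero
      have e2 := pow_le_pow_left₀ hr1.le (not_lt.1 h') 2
      rw [hdist] at e2
      exact le_of_mul_le_mul_left (by linarith) hv
    · rintro ⟨⟨h, h'⟩, h''⟩
      exact ⟨h', fun h3 => h'' ⟨h, h3⟩⟩
  have v1 := volume_segment u hun r1 b hr1 hb1 hb2
  have v2 := volume_segment (-u) (by rwa [norm_neg]) r2 (-a) hr2 (by linarith) (by linarith)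
  rw [← hT, ← hS1v] at v1
  rw [← hS2] at v2
  have hnn : 0 ≤ r1 ^ 2 * arccos (b / r1) - b * √(r1 ^ 2 - b ^ 2) := by
    rw [← integral_chord r1 b hr1 hb1 hb2]
    exact intervalIntegral.integral_nonneg hb2 fun x _ => by positivity
  rw [hlune, measure_sdiff hsub hS1meas.nullMeasurableSet (by rw [v1]; exact ENNReal.ofReal_ne_top),
    v1, v2, ← ENNReal.ofReal_sub _ hnn]
  congr 1
  have hh : r1 ^ 2 - b ^ 2 = r2 ^ 2 - a ^ 2 := by
    rw [show b = v - a by linarith]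
    nlinarith
  have hs : √(((r1 + v) ^ 2 - r2 ^ 2) * (r2 ^ 2 - (r1 - v) ^ 2)) =
      2 * v * √(r2 ^ 2 - a ^ 2) := by
    rw [show ((r1 + v) ^ 2 - r2 ^ 2) * (r2 ^ 2 - (r1 - v) ^ 2) =
      (2 * v) ^ 2 * (r2 ^ 2 - a ^ 2) by rw [ha]; field_simp; ring,
      sqrt_mul (by positivity), sqrt_sq (by positivity)]
  rw [hs, hh, neg_sq, neg_div, arccos_neg, ha, hb, div_div, div_div, ← ha, ← hb]
  linear_combination √(r2 ^ 2 - a ^ 2) * hab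
end

section
/- Let c ∈ ℝ² with ‖c‖ = v, let 0 < r1 ≤ v, and let g : ℝ → ℝ be a nonnegative measurable function. Then ∫_{B(c, r1)} g(‖y‖) dy = ∫_{v−r1}^{v+r1} 2·arccos((r² + v² − r1²)/(2 r v))·g(r)·r dr, where the left side is the integral of y ↦ g(‖y‖) over the disk B(c, r1) with respect to 2-dimensional Lebesgue measure. -/
/-!
A rotation carries the centre `c` to the point `v` of the positive real axis of `ℂ`, which changes
neither the norm nor the area. In polar coordinates, the law of cosines says that the point
`r e^{iθ}` lies in `B(v, r1)` exactly when `cos θ > k(r) = (r² + v² - r1²) / (2 r v)`, that is, for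
`|θ| < π`, when `|θ| < arccos (k r)`. Tonelli's theorem therefore gives the angular width
`2 arccos (k r)` as the weight of `g r * r`. For `r > 0` outside `(v - r1, v + r1)` one has
`k r ≥ 1`, so the weight vanishes there.
-/

open MeasureTheory Metric Real

/-- No bound on `k` is needed: `Real.arccos` is clamped to `0` for `k ≥ 1` and to `π` for
`k ≤ -1`, which are the right half-widths in these cases. -/
lemma lt_cos_iff_mem_Ioo_arccos {k θ : ℝ} (hθ : θ ∈ Set.Ioo (-π) π) :
    k < cos θ ↔ θ ∈ Set.Ioo (-arccos k) (arccos k) := by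
  have habs : |θ| < π := abs_lt.2 hθ
  rw [Set.mem_Ioo, ← abs_lt, ← cos_abs θ]
  constructor
  · intro h
    by_contra! h'
    rcases le_or_gt k (-1) with hk | hk
    · rw [arccos_of_le_neg_one hk] at h'
      linarith
    · have h1 := cos_le_cos_of_nonneg_of_le_pi (arccos_nonneg k) habs.le h'
      rw [cos_arccos hk.le (h.le.trans (cos_le_one _))] at h1
      linarith
  · intro h
    by_contra! h'
    have h1 := arccos_le_arccos h'
    rw [arccos_cos (abs_nonneg θ) habs.le] at h1
    linarith

lemma volume_lt_cos (k : ℝ) :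
    volume ({θ | k < cos θ} ∩ Set.Ioo (-π) π) = ENNReal.ofReal (2 * arccos k) := by
  have h : {θ | k < cos θ} ∩ Set.Ioo (-π) π = Set.Ioo (-arccos k) (arccos k) := by
    ext θ
    refine ⟨fun h => (lt_cos_iff_mem_Ioo_arccos h.2).1 h.1, fun h => ?_⟩
    have hπ := arccos_le_pi k
    have hθ : θ ∈ Set.Ioo (-π) π := ⟨by linarith [h.1], by linarith [h.2]⟩
    exact ⟨(lt_cos_iff_mem_Ioo_arccos hθ).2 h, hθ⟩
  rw [h, Real.volume_Ioo]
  ring_nf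

/-- The law of cosines, solved for the angle. -/
lemma polar_mem_ball_iff {v r1 r θ : ℝ} (hv : 0 < v) (hr1 : 0 < r1) (hr : 0 < r) :
    Complex.polarCoord.symm (r, θ) ∈ ball (v : ℂ) r1 ↔
      (r ^ 2 + v ^ 2 - r1 ^ 2) / (2 * r * v) < cos θ := by
  have hsq : ‖Complex.polarCoord.symm (r, θ) - v‖ ^ 2 = r ^ 2 + v ^ 2 - 2 * r * v * cos θ := by
    rw [Complex.polarCoord_symm_apply, ← Complex.normSq_eq_norm_sq, Complex.normSq_apply]
    simp [-Complex.ofReal_cos, -Complex.ofReal_sin]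
    nlinarith [sin_sq_add_cos_sq θ]
  rw [mem_ball, dist_eq_norm, ← sq_lt_sq₀ (norm_nonneg _) hr1.le, hsq,
    div_lt_iff₀ (by positivity)]
  constructor <;> intro h <;> linarith

/-- The identity for a disk centred on the positive real axis of `ℂ`. -/
lemma lintegral_radial_ball_complex {v r1 : ℝ} (hr1 : 0 < r1) (hle : r1 ≤ v)
    {g : ℝ → ℝ} (hg : Measurable g) (hg0 : ∀ x, 0 ≤ g x) :
    ∫⁻ z in ball (v : ℂ) r1, ENNReal.ofReal (g ‖z‖)
      = ∫⁻ r in Set.Ioo (v - r1) (v + r1), ENNReal.ofReal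
          (2 * arccos ((r ^ 2 + v ^ 2 - r1 ^ 2) / (2 * r * v)) * g r * r) := by
  have hv : 0 < v := hr1.trans_le hle
  set k : ℝ → ℝ := fun r => (r ^ 2 + v ^ 2 - r1 ^ 2) / (2 * r * v) with hk
  have hkm : Measurable k := by fun_prop
  have hS : MeasurableSet {p : ℝ × ℝ | k p.1 < cos p.2} :=
    measurableSet_lt (hkm.comp measurable_fst) (by fun_prop)
  set F : ℝ × ℝ → ENNReal := {p : ℝ × ℝ | k p.1 < cos p.2}.indicator
    (fun p => ENNReal.ofReal (g p.1 * p.1)) with hF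
  have hFm : Measurable F := by
    refine Measurable.indicator ?_ hS
    fun_prop
  have hpolar : ∫⁻ z in ball (v : ℂ) r1, ENNReal.ofReal (g ‖z‖)
      = ∫⁻ p in Set.Ioi (0 : ℝ) ×ˢ Set.Ioo (-π) π, F p := by
    rw [← lintegral_indicator measurableSet_ball, ← Complex.lintegral_comp_polarCoord_symm]
    refine setLIntegral_congr_fun (measurableSet_Ioi.prod measurableSet_Ioo) ?_
    rintro ⟨r, θ⟩ ⟨hr, -⟩
    have hr : 0 < r := hr
    have hiff := polar_mem_ball_iff (θ := θ) hv hr1 hr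
    by_cases h : k r < cos θ
    · have h1 := hiff.2 h
      simp only [hF, Set.indicator_of_mem h1, smul_eq_mul]
      rw [Set.indicator_of_mem (by exact h), Complex.norm_polarCoord_symm, abs_of_pos hr,
        ENNReal.ofReal_mul (hg0 r), mul_comm]
    · have h1 := fun h' => h (hiff.1 h')
      simp only [hF, Set.indicator_of_notMem h1, smul_eq_mul, mul_zero]
      rw [Set.indicator_of_notMem (by exact h)]
  have hinner : ∀ r, ∫⁻ θ in Set.Ioo (-π) π, F (r, θ)
      = ENNReal.ofReal (2 * arccos (k r) * g r * r) := by
    intro r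
    have h1 : (fun θ => F (r, θ))
        = {θ | k r < cos θ}.indicator (fun _ => ENNReal.ofReal (g r * r)) := rfl
    have hm : MeasurableSet {θ | k r < cos θ} := measurableSet_lt (by fun_prop) (by fun_prop)
    rw [h1, lintegral_indicator_const hm, Measure.restrict_apply hm, volume_lt_cos, mul_comm,
      ← ENNReal.ofReal_mul (mul_nonneg zero_le_two (arccos_nonneg _)), mul_assoc (2 * _)]
  rw [hpolar, Measure.volume_eq_prod, setLIntegral_prod _ hFm.aemeasurable]
  simp only [hinner]
  rw [← lintegral_indicator measurableSet_Ioi, ← lintegral_indicator measurableSet_Ioo]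
  congr 1 with r
  by_cases hr' : r ∈ Set.Ioo (v - r1) (v + r1)
  · have hr : r ∈ Set.Ioi (0 : ℝ) := (by linarith [hr'.1] : (0 : ℝ) < r)
    rw [Set.indicator_of_mem hr, Set.indicator_of_mem hr']
  · rw [Set.indicator_of_notMem hr', Set.indicator_apply_eq_zero]
    intro hr
    have hr : 0 < r := hr
    have h1 : 1 ≤ k r := by
      rw [hk, le_div_iff₀ (by positivity)]
      -- the numerator minus the denominator is `(r - v)² - r1²`
      have h2 : r1 ≤ |r - v| := by
        by_contra! h3
        rw [abs_lt] at h3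
        exact hr' ⟨by linarith, by linarith⟩
      have h4 := pow_le_pow_left₀ hr1.le h2 2
      rw [sq_abs] at h4
      linarith
    simp [arccos_of_one_le h1]

/-- The isometry is the rotation by the argument of `c`, followed by `ℂ ≃ ℝ²`. -/
lemma exists_isometry_map_norm_eq (c : EuclideanSpace ℝ (Fin 2)) (hc : c ≠ 0) :
    ∃ e : ℂ ≃ₗᵢ[ℝ] EuclideanSpace ℝ (Fin 2), e (‖c‖ : ℂ) = c := by
  set w : ℂ := Complex.orthonormalBasisOneI.repr.symm c with hw
  have hn : ‖w‖ = ‖c‖ := LinearIsometryEquiv.norm_map _ _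
  have h0 : (‖c‖ : ℂ) ≠ 0 := by exact_mod_cast norm_ne_zero_iff.2 hc
  obtain ⟨u, hu⟩ : ∃ u : Circle, (u : ℂ) = w / ‖c‖ := by
    refine ⟨⟨w / ‖c‖, mem_sphere_zero_iff_norm.2 ?_⟩, rfl⟩
    rw [norm_div, hn, Complex.norm_real, norm_norm, div_self (norm_ne_zero_iff.2 hc)]
  refine ⟨(rotation u).trans Complex.orthonormalBasisOneI.repr, ?_⟩
  rw [LinearIsometryEquiv.trans_apply, rotation_apply, hu, div_mul_cancel₀ _ h0, hw,
    LinearIsometryEquiv.apply_symm_apply]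

/-- Polar-coordinate identity for an integral of a radially symmetric function over an
off-center disk `B(c, r1)` with `0 < r1 ≤ v = ‖c‖`. -/
theorem integral_radial_over_offcenter_disk (c : EuclideanSpace ℝ (Fin 2)) (v r1 : ℝ)
    (hc : ‖c‖ = v) (hr1 : 0 < r1) (hle : r1 ≤ v)
    (g : ℝ → ℝ) (hg : Measurable g) (hg0 : ∀ x, 0 ≤ g x) :
    ∫⁻ y in ball c r1, ENNReal.ofReal (g ‖y‖) ∂volume
      = ∫⁻ r in Set.Ioo (v - r1) (v + r1),
          ENNReal.ofReal
            (2 * Real.arccos ((r ^ 2 + v ^ 2 - r1 ^ 2) / (2 * r * v)) * g r * r) ∂volume := by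
  have hc0 : c ≠ 0 := norm_pos_iff.1 (by rw [hc]; exact hr1.trans_le hle)
  obtain ⟨e, he⟩ := exists_isometry_map_norm_eq c hc0
  rw [hc] at he
  rw [← lintegral_radial_ball_complex hr1 hle hg hg0,
    ← e.measurePreserving.setLIntegral_comp_preimage measurableSet_ball (by fun_prop), ← he,
    e.preimage_ball, e.symm_apply_apply]
  simp only [e.norm_map]
end

section
/- Let c ∈ ℝ² with ‖c‖ = v, let r1, r2, v > 0 satisfy r2 − r1 < v < r1 + r2 and r2 ≥ |v − r1|, and let α > 2, s > 0. Then ∫_{ℝ² \ (B(c, r1) ∪ B(O, r2))} (1 + ‖y‖^α / s)^{−1} dy = ∫_{r2}^{∞} 2π r·(1 + r^α/s)^{−1} dr − ∫_{r2}^{v+r1} 2·arccos((r² + v² − r1²)/(2 r v))·r·(1 + r^α/s)^{−1} dr. -/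
/-!
An isometry `ℂ ≃ EuclideanSpace ℝ (Fin 2)` sending `v` to `c` preserves the measure and the norm, so
one may assume that the centre of the first ball is the positive real `v`. In polar coordinates, by
the law of cosines, the point `r * exp (θ * I)` lies outside `ball v r1` exactly when
`cos θ ≤ q r`, where `q r = (r ^ 2 + v ^ 2 - r1 ^ 2) / (2 * r * v)`. On `(-π, π)` this set of angles
has length `2 * π - 2 * arccos (q r)`, also for `q r` outside `[-1, 1]` because `arccos` is constant
there. Fubini's theorem reduces the integral to the radial one, and `arccos (q r) = 0` as soon as
`v + r1 ≤ r`. Integrability comes from the bound `(1 + r ^ α / s)⁻¹ ≤ s * r ^ (-α)` and `2 < α`.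
-/

open MeasureTheory Metric Real

lemma exists_linearIsometryEquiv_apply_norm (c : EuclideanSpace ℝ (Fin 2)) (hc : 0 < ‖c‖) :
    ∃ L : ℂ ≃ₗᵢ[ℝ] EuclideanSpace ℝ (Fin 2), L (‖c‖ : ℂ) = c := by
  set R := Complex.orthonormalBasisOneI.repr
  have hne : (‖c‖ : ℂ) ≠ 0 := by exact_mod_cast hc.ne'
  have hn : ‖R.symm c‖ = ‖c‖ := R.symm.norm_map c
  -- the unit complex number in the direction of `c`
  let a : Circle := ⟨R.symm c / ‖c‖, by
    change _ ∈ sphere (0 : ℂ) 1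
    rw [mem_sphere_zero_iff_norm, norm_div, hn, Complex.norm_real, norm_norm, div_self hc.ne']⟩
  refine ⟨(rotation a).trans R, ?_⟩
  have : rotation a (‖c‖ : ℂ) = R.symm c := by
    rw [rotation_apply]
    exact div_mul_cancel₀ _ hne
  simp [this]

lemma volume_cos_le_inter_Ioo (q : ℝ) :
    volume.real ({θ | cos θ ≤ q} ∩ Set.Ioo (-π) π) = 2 * π - 2 * arccos q := by
  have hpi := arccos_le_pi q
  have h0 := arccos_nonneg q
  have hS : {θ | cos θ ≤ q} ∩ Set.Ioo (-π) π
      = Set.Ioo (-π) π \ Set.Ioo (-arccos q) (arccos q) := by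
    ext θ
    simp only [Set.mem_inter_iff, Set.mem_ofPred_eq, Set.mem_sdiff, and_comm (a := cos θ ≤ q)]
    refine and_congr_right fun hθ => ?_
    have habs : |θ| < π := abs_lt.2 hθ
    rw [Set.mem_Ioo, ← abs_lt, not_lt, ← cos_abs]
    rcases le_or_gt q (-1) with hq | hq
    · rw [arccos_of_le_neg_one hq]
      have : cos π < cos |θ| := cos_lt_cos_of_nonneg_of_le_pi (abs_nonneg _) le_rfl habs
      rw [cos_pi] at this
      constructor <;> intro h <;> linarith
    rcases le_or_gt 1 q with hq' | hq'
    · rw [arccos_of_one_le hq']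
      have := cos_le_one |θ|
      have := abs_nonneg θ
      constructor <;> intro h <;> linarith
    · nth_rewrite 1 [← cos_arccos hq.le hq'.le]
      exact strictAntiOn_cos.le_iff_ge ⟨abs_nonneg _, habs.le⟩ ⟨h0, hpi⟩
  rw [hS, measureReal_sdiff (Set.Ioo_subset_Ioo (by linarith) hpi) measurableSet_Ioo
      measure_Ioo_lt_top.ne,
    Real.volume_real_Ioo_of_le (by linarith [pi_pos]), Real.volume_real_Ioo_of_le (by linarith)]
  ring

lemma integrableOn_mul_pathloss {α s r2 : ℝ} (hr2 : 0 < r2) (hα : 2 < α) (hs : 0 < s) :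
    IntegrableOn (fun r : ℝ => r * (1 + r ^ α / s)⁻¹) (Set.Ioi r2) := by
  have h := (integrableOn_Ioi_rpow_of_lt (show 1 - α < -1 by linarith) hr2).const_mul s
  refine Integrable.mono' h (by fun_prop) ?_
  filter_upwards [ae_restrict_mem measurableSet_Ioi] with r hr
  have hr0 : 0 < r := hr2.trans hr
  have hp : 0 < r ^ α := rpow_pos_of_pos hr0 α
  rw [Real.norm_of_nonneg (by positivity), rpow_sub hr0, rpow_one]
  calc r * (1 + r ^ α / s)⁻¹ ≤ r * (r ^ α / s)⁻¹ := by gcongr; linarith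
    _ = s * (r / r ^ α) := by field_simp

/-- The law of cosines: in polar coordinates around the origin, the complement of `ball v r1` is
cut out by a bound on the cosine of the angle. -/
lemma polar_mem_ball_compl_iff {v r1 r θ : ℝ} (hv : 0 < v) (hr1 : 0 < r1) (hr : 0 < r) :
    Complex.polarCoord.symm (r, θ) ∉ ball (v : ℂ) r1
      ↔ cos θ ≤ (r ^ 2 + v ^ 2 - r1 ^ 2) / (2 * r * v) := by
  rw [mem_ball, not_lt, dist_eq_norm, ← sq_le_sq₀ hr1.le (norm_nonneg _), Complex.sq_norm,
    Complex.normSq_apply, le_div_iff₀ (by positivity), Complex.polarCoord_symm_apply]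
  simp [Complex.cos_ofReal_re, Complex.sin_ofReal_re]
  have h := sin_sq_add_cos_sq θ
  have : (r * cos θ - v) * (r * cos θ - v) + r * sin θ * (r * sin θ)
      = r ^ 2 + v ^ 2 - cos θ * (2 * r * v) := by
    linear_combination r ^ 2 * h
  rw [this]
  constructor <;> intro h <;> linarith

theorem integral_pathloss_outside_union_intersecting (c : EuclideanSpace ℝ (Fin 2))
    (v r1 r2 α s : ℝ) (hc : ‖c‖ = v) (hr1 : 0 < r1) (hr2 : 0 < r2) (hv : 0 < v)
    (h1 : r2 - r1 < v) (h2 : v < r1 + r2) (h3 : |v - r1| ≤ r2) (hα : 2 < α) (hs : 0 < s) :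
    ∫ y in (ball c r1 ∪ ball (0 : EuclideanSpace ℝ (Fin 2)) r2)ᶜ,
        (1 + ‖y‖ ^ α / s)⁻¹ ∂volume
      = (∫ r in Set.Ioi r2, 2 * π * r * (1 + r ^ α / s)⁻¹)
        - ∫ r in Set.Ioo r2 (v + r1),
            2 * Real.arccos ((r ^ 2 + v ^ 2 - r1 ^ 2) / (2 * r * v)) * r
              * (1 + r ^ α / s)⁻¹ := by
  obtain ⟨L, hL⟩ := exists_linearIsometryEquiv_apply_norm c (hc ▸ hv)
  rw [hc] at hL
  set q : ℝ → ℝ := fun r => (r ^ 2 + v ^ 2 - r1 ^ 2) / (2 * r * v) with hq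
  set w : ℝ → ℝ := fun r => r * (1 + r ^ α / s)⁻¹ with hw
  have hqm : Measurable q := by fun_prop
  have hwi : IntegrableOn w (Set.Ioi r2) := integrableOn_mul_pathloss hr2 hα hs
  have hwi' : IntegrableOn w (Set.Ici r2) := (integrableOn_Ici_iff_integrableOn_Ioi (by simp)).2 hwi
  have hpre : L ⁻¹' (ball c r1 ∪ ball 0 r2)ᶜ = (ball (v : ℂ) r1 ∪ ball 0 r2)ᶜ := by
    rw [← hL, Set.preimage_compl, Set.preimage_union, L.preimage_ball, L.preimage_ball]
    simp
  rw [← L.measurePreserving.setIntegral_preimage_emb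
    L.toHomeomorph.measurableEmbedding, hpre]
  simp_rw [L.norm_map]
  rw [← integral_indicator (measurableSet_ball.union measurableSet_ball).compl,
    ← Complex.integral_comp_polarCoord_symm]
  -- the integrand in polar coordinates
  let A : Set (ℝ × ℝ) := {p | r2 ≤ p.1 ∧ cos p.2 ≤ q p.1}
  have hA : MeasurableSet A := (measurableSet_le measurable_const measurable_fst).inter
    (measurableSet_le (measurable_cos.comp measurable_snd) (hqm.comp measurable_fst))
  have hpolar : ∀ p ∈ polarCoord.target,
      p.1 • ((ball (v : ℂ) r1 ∪ ball 0 r2)ᶜ).indicator (fun z => (1 + ‖z‖ ^ α / s)⁻¹)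
        (Complex.polarCoord.symm p) = A.indicator (fun p => w p.1) p := by
    rintro ⟨r, θ⟩ ⟨hr, -⟩
    have hr : 0 < r := hr
    have hn : ‖Complex.polarCoord.symm (r, θ)‖ = r := by
      rw [Complex.norm_polarCoord_symm, abs_of_pos hr]
    have hmem : Complex.polarCoord.symm (r, θ) ∈ (ball (v : ℂ) r1 ∪ ball 0 r2)ᶜ
        ↔ (r, θ) ∈ A := by
      rw [Set.mem_compl_iff, Set.mem_union, not_or, polar_mem_ball_compl_iff hv hr1 hr,
        mem_ball_zero_iff, hn, not_lt, and_comm]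
      rfl
    by_cases h : (r, θ) ∈ A
    · rw [Set.indicator_of_mem h, Set.indicator_of_mem (hmem.2 h), hn, smul_eq_mul]
    · rw [Set.indicator_of_notMem h, Set.indicator_of_notMem (mt hmem.1 h), smul_zero]
  rw [setIntegral_congr_fun polarCoord.open_target.measurableSet hpolar, polarCoord_target,
    Measure.volume_eq_prod]
  have hint : IntegrableOn (A.indicator fun p => w p.1) (Set.Ioi 0 ×ˢ Set.Ioo (-π) π)
      ((volume : Measure ℝ).prod volume) := by
    have h : Integrable (fun p : ℝ × ℝ => (Set.Ici r2).indicator w p.1 * 1)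
        (((volume : Measure ℝ).restrict (Set.Ioi 0)).prod
          ((volume : Measure ℝ).restrict (Set.Ioo (-π) π))) :=
      Integrable.mul_prod (g := fun _ => (1 : ℝ))
        ((integrable_indicator_iff measurableSet_Ici).2 hwi').restrict
        (integrable_const 1)
    rw [Measure.prod_restrict] at h
    refine (h.indicator hA).congr (ae_of_all _ fun p => ?_)
    by_cases hp : p ∈ A
    · have : p.1 ∈ Set.Ici r2 := hp.1
      simp [hp, this]
    · simp [hp]
  rw [setIntegral_prod _ hint]
  have hinner : ∀ r : ℝ, ∫ θ in Set.Ioo (-π) π, A.indicator (fun p => w p.1) (r, θ)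
      = (Set.Ici r2).indicator (fun r => 2 * π * w r - 2 * arccos (q r) * w r) r := by
    intro r
    by_cases hr : r ∈ Set.Ici r2
    · have : ∀ θ, A.indicator (fun p => w p.1) (r, θ)
          = {θ | cos θ ≤ q r}.indicator (fun _ => w r) θ := by
        intro θ
        have hr : r2 ≤ r := hr
        simp [A, Set.indicator_apply, hr]
      simp_rw [this]
      have hm : MeasurableSet {θ | cos θ ≤ q r} :=
        measurableSet_le measurable_cos measurable_const
      rw [integral_indicator_const _ hm, measureReal_restrict_apply hm,
        volume_cos_le_inter_Ioo, Set.indicator_of_mem hr, smul_eq_mul]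
      ring
    · have hr' : ¬ r2 ≤ r := hr
      simp [A, hr']
  simp_rw [hinner]
  have hac : IntegrableOn (fun r => 2 * arccos (q r) * w r) (Set.Ioi r2) := by
    refine hwi.bdd_mul (c := 2 * π)
      ((measurable_arccos.comp hqm).const_mul 2).aestronglyMeasurable (ae_of_all _ fun r => ?_)
    rw [Real.norm_of_nonneg (by have := arccos_nonneg (q r); positivity)]
    linarith [arccos_le_pi (q r)]
  rw [setIntegral_indicator measurableSet_Ici,
    Set.inter_eq_right.2 (Set.Ici_subset_Ioi.2 hr2), integral_Ici_eq_integral_Ioi,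
    integral_sub (hwi.const_mul _) hac]
  congr 1
  · simp only [hw, mul_assoc]
  -- beyond `v + r1` the circle of radius `r` misses `ball v r1` and `arccos (q r)` vanishes
  · rw [setIntegral_eq_of_subset_of_forall_sdiff_eq_zero (s := Set.Ioo r2 (v + r1))
      measurableSet_Ioi Set.Ioo_subset_Ioi_self]
    · simp only [hw, hq, mul_assoc]
    · rintro r ⟨hr, hr'⟩
      have hr : r2 < r := hr
      have hge : v + r1 ≤ r := not_lt.1 fun h => hr' ⟨hr, h⟩
      have : arccos (q r) = 0 := by
        rw [arccos_eq_zero, hq]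
        have : 0 < r := hr2.trans hr
        rw [le_div_iff₀ (by positivity)]
        nlinarith
      simp [this]
end

section
/- Let α > 2, T > 0, λ > 0, q ∈ [0, 1], and p ∈ (0, 1]. Then ∫_{0}^{∞} 2 p λ π r · exp(−p λ π r²) · exp(−2π (1−p) q λ · ∫_{0}^{∞} r'·(1 + r'^α/(T·r^α))^{−1} dr') · exp(−2π p q λ · ∫_{r}^{∞} r'·(1 + r'^α/(T·r^α))^{−1} dr') dr = p / (p + q·(ρ1(T, α) + (1 − p)·ρ2(T, α))), where ρ1(T, α) = T^{2/α} · ∫_{T^{−2/α}}^{∞} (1 + u^{α/2})^{−1} du and ρ2(T, α) = T^{2/α} · ∫_{0}^{T^{−2/α}} (1 + u^{α/2})^{−1} du. -/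
open MeasureTheory Real

/-!
The substitution `u = r'² / (T^{2/α} r²)` turns each interference integral into
`r² T^{2/α} / 2` times an integral of the fixed function `(1 + u^{α/2})⁻¹`, over `(0, ∞)` for the
field interfering from everywhere and over `(T^{-2/α}, ∞)` for the field outside the serving
distance (`interference_integral`). As `α > 2` this function is integrable
(`integrableOn_kernel`), so the integral over `(0, ∞)` splits at `T^{-2/α}` and the two exponents
add up to `-πλq (ρ1 + (1 - p) ρ2) r²`. The outer integral is then the elementary
`∫ 2pλπ r e^{-πλ(p + q(ρ1 + (1 - p)ρ2)) r²} dr` (`integral_linear_mul_exp_sq`).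
-/

/-- The kernel is at most `1` near `0` and at most `u ^ (-(α / 2))`, with `α / 2 > 1`, near
infinity. -/
lemma integrableOn_kernel {α : ℝ} (hα : 2 < α) :
    IntegrableOn (fun u : ℝ => (1 + u ^ (α / 2))⁻¹) (Set.Ioi 0) := by
  have hmeas : Measurable (fun u : ℝ => (1 + u ^ (α / 2))⁻¹) := by fun_prop
  rw [← Set.Ioc_union_Ioi_eq_Ioi (zero_le_one' ℝ)]
  refine IntegrableOn.union ?_ ?_
  · refine Measure.integrableOn_of_bounded (M := 1) (by simp) hmeas.aestronglyMeasurable ?_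
    filter_upwards [ae_restrict_mem measurableSet_Ioc] with u hu
    have : 0 ≤ u ^ (α / 2) := rpow_nonneg hu.1.le _
    rw [norm_of_nonneg (by positivity)]
    exact inv_le_one_of_one_le₀ (by linarith)
  · refine Integrable.mono' (integrableOn_Ioi_rpow_of_lt (a := -(α / 2)) (by linarith) one_pos)
      hmeas.aestronglyMeasurable ?_
    filter_upwards [ae_restrict_mem measurableSet_Ioi] with u hu
    have hu0 : 0 < u := one_pos.trans hu
    have : 0 < u ^ (α / 2) := rpow_pos_of_pos hu0 _
    rw [norm_of_nonneg (by positivity), rpow_neg hu0.le]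
    exact inv_anti₀ this (by linarith)

/-- Substitution `u = x² / (T^{2/α} r²)` in the interference integral outside the radius `√c`. -/
lemma interference_integral {α T r c : ℝ} (hα : 2 < α) (hT : 0 < T) (hr : 0 < r) (hc : 0 ≤ c) :
    ∫ x in Set.Ioi (c ^ (2 : ℝ)⁻¹), x * (1 + x ^ α / (T * r ^ α))⁻¹
      = r ^ 2 * T ^ (2 / α) / 2 *
        ∫ u in Set.Ioi ((r ^ 2 * T ^ (2 / α))⁻¹ * c), (1 + u ^ (α / 2))⁻¹ := by
  have hTa : 0 < T ^ (2 / α) := rpow_pos_of_pos hT _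
  have hK : 0 < r ^ 2 * T ^ (2 / α) := by positivity
  have hKpow : (r ^ 2 * T ^ (2 / α)) ^ (α / 2) = T * r ^ α := by
    rw [mul_rpow (by positivity) hTa.le, ← rpow_mul hT.le, ← rpow_natCast r 2, ← rpow_mul hr.le,
      show 2 / α * (α / 2) = 1 by field_simp, rpow_one, mul_comm]
    congr 2
    push_cast
    ring
  have hscale := integral_comp_mul_left_Ioi (fun u : ℝ => (1 + u ^ (α / 2))⁻¹) c (inv_pos.2 hK)
  have hsq := integral_comp_rpow_Ioi_of_pos' (p := 2)
    (g := fun y : ℝ => (1 + ((r ^ 2 * T ^ (2 / α))⁻¹ * y) ^ (α / 2))⁻¹) two_pos hc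
  rw [hscale] at hsq
  simp only [smul_eq_mul, inv_inv] at hsq
  rw [div_mul_eq_mul_div, ← hsq, ← integral_div]
  refine setIntegral_congr_fun measurableSet_Ioi fun x hx => ?_
  have hx0 : 0 < x := (rpow_nonneg hc _).trans_lt hx
  have : ((r ^ 2 * T ^ (2 / α))⁻¹ * x ^ (2 : ℝ)) ^ (α / 2) = x ^ α / (T * r ^ α) := by
    rw [mul_rpow (by positivity) (by positivity), inv_rpow hK.le, hKpow, ← rpow_mul hx0.le,
      mul_div_cancel₀ α (two_ne_zero' ℝ), inv_mul_eq_div]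
  simp only [this]
  norm_num
  ring

lemma integral_linear_mul_exp_sq {b : ℝ} (hb : 0 < b) :
    ∫ x in Set.Ioi (0 : ℝ), x * exp (-b * x ^ 2) = 1 / (2 * b) := by
  have h := integral_rpow_mul_exp_neg_mul_rpow (p := 2) (q := 1) two_pos (by norm_num) hb
  norm_num [rpow_neg_one] at h
  simp only [neg_mul]
  rw [h]
  field_simp

/-- Asymptotic coverage probability (Corollary): averaging over the serving distance with
Rayleigh density `2 p λ π r e^{−p λ π r²}` and the Laplace-transform exponents of the two
Poisson interference fields gives `P_c(p) = p / (p + q (ρ1 + (1 − p) ρ2))`. -/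
theorem asymptotic_coverage_probability (α T lam q p : ℝ)
    (hα : 2 < α) (hT : 0 < T) (hlam : 0 < lam)
    (hq : q ∈ Set.Icc (0 : ℝ) 1) (hp : p ∈ Set.Ioc (0 : ℝ) 1) :
    ∫ r in Set.Ioi (0 : ℝ),
        2 * p * lam * π * r * Real.exp (-(p * lam * π * r ^ 2))
          * Real.exp (-(2 * π * (1 - p) * q * lam *
              ∫ r' in Set.Ioi (0 : ℝ), r' * (1 + r' ^ α / (T * r ^ α))⁻¹))
          * Real.exp (-(2 * π * p * q * lam *
              ∫ r' in Set.Ioi r, r' * (1 + r' ^ α / (T * r ^ α))⁻¹))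
      = p / (p + q *
          ((T ^ (2 / α) * ∫ u in Set.Ioi (T ^ (-(2 / α))), (1 + u ^ (α / 2))⁻¹)
            + (1 - p) *
              (T ^ (2 / α) * ∫ u in Set.Ioc (0 : ℝ) (T ^ (-(2 / α))), (1 + u ^ (α / 2))⁻¹))) := by
  obtain ⟨hq0, -⟩ := hq
  obtain ⟨hp0, hp1⟩ := hp
  set s : ℝ := T ^ (-(2 / α)) with hs
  set t : ℝ := T ^ (2 / α) with ht
  set A : ℝ := ∫ u in Set.Ioi s, (1 + u ^ (α / 2))⁻¹ with hA
  set B : ℝ := ∫ u in Set.Ioc (0 : ℝ) s, (1 + u ^ (α / 2))⁻¹ with hB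
  have hs0 : 0 < s := rpow_pos_of_pos hT _
  have ht0 : 0 < t := rpow_pos_of_pos hT _
  have hst : s = t⁻¹ := rpow_neg hT.le _
  have hker := integrableOn_kernel hα
  have hsplit : ∫ u in Set.Ioi (0 : ℝ), (1 + u ^ (α / 2))⁻¹ = B + A := by
    rw [← Set.Ioc_union_Ioi_eq_Ioi hs0.le]
    exact setIntegral_union (Set.Ioc_disjoint_Ioi le_rfl) measurableSet_Ioi
      (hker.mono_set Set.Ioc_subset_Ioi_self) (hker.mono_set (Set.Ioi_subset_Ioi hs0.le))
  have hA0 : 0 ≤ A := setIntegral_nonneg measurableSet_Ioi fun u hu => by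
    have := rpow_nonneg (hs0.trans hu).le (α / 2)
    positivity
  have hB0 : 0 ≤ B := setIntegral_nonneg measurableSet_Ioc fun u hu => by
    have := rpow_nonneg hu.1.le (α / 2)
    positivity
  have hD : 0 < p + q * (t * A + (1 - p) * (t * B)) := by
    have : 0 ≤ 1 - p := by linarith
    positivity
  have hint : ∀ r ∈ Set.Ioi (0 : ℝ),
      2 * p * lam * π * r * Real.exp (-(p * lam * π * r ^ 2))
          * Real.exp (-(2 * π * (1 - p) * q * lam *
              ∫ r' in Set.Ioi (0 : ℝ), r' * (1 + r' ^ α / (T * r ^ α))⁻¹))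
          * Real.exp (-(2 * π * p * q * lam *
              ∫ r' in Set.Ioi r, r' * (1 + r' ^ α / (T * r ^ α))⁻¹))
      = 2 * p * lam * π *
        (r * exp (-(π * lam * (p + q * (t * A + (1 - p) * (t * B)))) * r ^ 2)) := by
    intro r hr
    have hr0 : 0 < r := hr
    have h0 := interference_integral (c := 0) hα hT hr0 le_rfl
    rw [zero_rpow (by norm_num), mul_zero, hsplit, ← ht] at h0
    have h1 := interference_integral (c := r ^ (2 : ℝ)) hα hT hr0 (by positivity)
    rw [rpow_rpow_inv hr0.le two_ne_zero, rpow_two, ← ht,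
      show (r ^ 2 * t)⁻¹ * r ^ 2 = s by rw [hst]; field_simp, ← hA] at h1
    rw [h0, h1, mul_assoc, mul_assoc, ← exp_add, ← exp_add, mul_assoc]
    congr 3
    ring
  rw [setIntegral_congr_fun measurableSet_Ioi hint, integral_const_mul,
    integral_linear_mul_exp_sq (by positivity)]
  field_simp
end
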